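/- Let α, β, γ, σ be integers with β ≥ γ > σ ≥ 0, α + σ ≥ 2γ, α + β + σ > 3, and γ < β, and let G be the group presented by ⟨a,b | a^(2^α) = b^(2^β) = [a,b,a] = [a,b,b] = e, a^(2^(α+σ-γ)) = [a,b]^(2^σ)⟩ (general type). Then G is capable if and only if α = β and γ < β - 1. -/

import Mathlib

/-- The paper's commutator convention: `[x,y] = x⁻¹y⁻¹xy`. -/
def pcomm {G : Type*} [Group G] (x y : G) : G := x⁻¹ * y⁻¹ * x * y

/-- A group is capable if it is isomorphic to `K/Z(K)` for some group `K`. -/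
def IsCapable (G : Type*) [Group G] : Prop :=
  ∃ (K : Type) (_ : Group K), Nonempty ((K ⧸ Subgroup.center K) ≃* G)

/-- Relators of the type (ii) (general type) presentation
`⟨a,b | a^(2^α) = b^(2^β) = [a,b,a] = [a,b,b] = e, a^(2^(α+σ-γ)) = [a,b]^(2^σ)⟩`. -/
def relsII (α β γ σ : ℕ) : Set (FreeGroup (Fin 2)) :=
  let a : FreeGroup (Fin 2) := FreeGroup.of 0
  let b : FreeGroup (Fin 2) := FreeGroup.of 1
  {a ^ 2 ^ α, b ^ 2 ^ β, pcomm (pcomm a b) a, pcomm (pcomm a b) b,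
    a ^ 2 ^ (α + σ - γ) * (pcomm a b ^ 2 ^ σ)⁻¹}

/-!
The group `G` on `a, b` is capable precisely when its relators generate, as a normal subgroup, the
group of all words that are central in `⟨A, B⟩`, for some pair `A, B` in some group.

Necessity: put `C = [A,B]`, `X = [C,A]` and `Y = [C,B]`. As `X` and `Y` are central, the relations
of `G` modulo the center give `X ^ 2 ^ σ = 1` and `C ^ 2 ^ (α + σ - γ) = Y ^ 2 ^ σ`, hence
`C ^ 2 ^ α = C ^ 2 ^ β = 1`, whereas `[A ^ 2 ^ (α - 1), B]` and `[A, B ^ 2 ^ (β - 1)]` are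
nontrivial because `a` and `b` have orders `2 ^ α` and `2 ^ β` in `G`. These commutators are
`C ^ 2 ^ (α - 1)` and, for `γ < β - 1`, `C ^ 2 ^ (β - 1)`, so `α = β`. For `γ = β - 1` the second
one acquires a power of `Y` that cancels it.

Sufficiency: let `A` act on `ℤ × ⟨a, [a,b]⟩` as the translation by `(1, 0)`, and `B` as the inverse
of the unipotent automorphism with `[A,B]` and `[A,B,B]` the translations by `a` and `[a,b]`.
-/

section CentralWords

variable {ι G : Type*} [Group G]

/-- The words in the tuple `x` that are central in the subgroup generated by `x`, that is, the
kernel of the map from the free group onto the inner automorphism group of that subgroup. -/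
def centralWords (x : ι → G) : Subgroup (FreeGroup ι) :=
  (Subgroup.center (FreeGroup.lift x).range).comap (FreeGroup.lift x).rangeRestrict

instance centralWords_normal (x : ι → G) : (centralWords x).Normal := by
  unfold centralWords
  infer_instance

theorem centralWords_eq_comap_centralizer (x : ι → G) :
    centralWords x = (Subgroup.centralizer (Set.range x)).comap (FreeGroup.lift x) := by
  ext w
  rw [← Subgroup.centralizer_closure, ← FreeGroup.range_lift_eq_closure]
  simp only [centralWords, Subgroup.mem_comap, Subgroup.mem_center_iff,
    Subgroup.mem_centralizer_iff, Subtype.forall, Subtype.ext_iff]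
  rfl

theorem centralizer_eq_center_of_closure_sup_center_eq_top {s : Set G}
    (hs : Subgroup.closure s ⊔ Subgroup.center G = ⊤) :
    Subgroup.centralizer s = Subgroup.center G := by
  refine le_antisymm ?_ (Subgroup.center_le_centralizer s)
  rw [← Subgroup.centralizer_univ, ← Subgroup.coe_top, Subgroup.le_centralizer_iff, ← hs]
  exact sup_le (Subgroup.closure_le_centralizer_centralizer s) (Subgroup.center_le_centralizer _)

theorem isCapable_presentedGroup_iff {rels : Set (FreeGroup ι)} :
    IsCapable (PresentedGroup rels) ↔
      ∃ (P : Type) (_ : Group P) (x : ι → P), centralWords x = Subgroup.normalClosure rels := by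
  constructor
  · rintro ⟨K, _, ⟨e⟩⟩
    let π : K →* PresentedGroup rels := e.toMonoidHom.comp (QuotientGroup.mk' _)
    have hker : π.ker = Subgroup.center K := by
      exact (MonoidHom.ker_mulEquiv_comp _ e).trans (QuotientGroup.ker_mk' _)
    choose x hx using fun i =>
      (e.surjective.comp (QuotientGroup.mk'_surjective _)) (PresentedGroup.of (rels := rels) i)
    have hlift : π.comp (FreeGroup.lift x) = PresentedGroup.mk rels := by
      ext i
      simpa using! hx i
    have hgen : Subgroup.closure (Set.range x) ⊔ Subgroup.center K = ⊤ := by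
      have hrange : π '' Set.range x = Set.range PresentedGroup.of := by
        rw [← Set.range_comp]
        exact congrArg Set.range (funext hx)
      rw [← hker, ← Subgroup.comap_map_eq, MonoidHom.map_closure, hrange,
        PresentedGroup.closure_range_of, Subgroup.comap_top]
    refine ⟨K, inferInstance, x, ?_⟩
    rw [centralWords_eq_comap_centralizer, centralizer_eq_center_of_closure_sup_center_eq_top hgen,
      ← hker, MonoidHom.comap_ker, hlift]
    exact QuotientGroup.ker_mk' _
  · rintro ⟨P, _, x, hx⟩
    let ψ : FreeGroup ι →* (FreeGroup.lift x).range ⧸ Subgroup.center (FreeGroup.lift x).range :=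
      (QuotientGroup.mk' _).comp (FreeGroup.lift x).rangeRestrict
    have hψ : Function.Surjective ψ :=
      (QuotientGroup.mk'_surjective _).comp (FreeGroup.lift x).rangeRestrict_surjective
    have hker : ψ.ker = Subgroup.normalClosure rels := by
      rw [← hx, ← MonoidHom.comap_ker, QuotientGroup.ker_mk', centralWords]
    exact ⟨_, inferInstance, ⟨(QuotientGroup.quotientKerEquivOfSurjective ψ hψ).symm.trans
      (QuotientGroup.quotientMulEquivOfEq hker)⟩⟩

end CentralWords

section Commutator

variable {G H : Type*} [Group G] [Group H] {x y z : G}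

theorem map_pcomm (f : G →* H) (x y : G) : f (pcomm x y) = pcomm (f x) (f y) := by
  simp [pcomm]

theorem pcomm_eq_one_iff : pcomm x y = 1 ↔ Commute x y := by
  rw [pcomm, mul_assoc, ← mul_inv_rev, inv_mul_eq_one, Commute, SemiconjBy, eq_comm]

theorem commute_pcomm (hx : Commute z x) (hy : Commute z y) : Commute z (pcomm x y) :=
  ((hx.inv_right.mul_right hy.inv_right).mul_right hx).mul_right hy

theorem mul_eq_mul_mul_pcomm (x y : G) : x * y = y * (x * pcomm x y) := by
  simp [pcomm, mul_assoc]

theorem commute_mul_inv_iff_pcomm_eq : Commute (x * y⁻¹) z ↔ pcomm x z = pcomm y z := by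
  rw [pcomm, pcomm, mul_left_inj, mul_assoc, mul_assoc, inv_mul_eq_iff_eq_mul, ← mul_assoc,
    ← mul_assoc, ← mul_inv_eq_iff_eq_mul, ← Commute.inv_right_iff, commute_iff_eq, eq_comm,
    mul_assoc, mul_assoc]

theorem pcomm_mul_left (x y z : G) :
    pcomm (x * y) z = pcomm x z * pcomm (pcomm x z) y * pcomm y z := by
  simp [pcomm, mul_assoc]

theorem pcomm_mul_right (x y z : G) :
    pcomm x (y * z) = pcomm x z * (pcomm x y * pcomm (pcomm x y) z) := by
  simp [pcomm, mul_assoc]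

theorem pcomm_mul_left_of_commute (h : Commute x z) : pcomm (x * y) z = pcomm y z := by
  rw [pcomm_mul_left, pcomm_eq_one_iff.2 h, pcomm_eq_one_iff.2 (Commute.one_left y), one_mul,
    one_mul]

theorem pcomm_pow_left_of_commute (h : Commute (pcomm x y) x) (n : ℕ) :
    pcomm (x ^ n) y = pcomm x y ^ n := by
  induction n with
  | zero => simp [pcomm]
  | succ n ih =>
    rw [pow_succ, pcomm_mul_left, ih, pcomm_eq_one_iff.2 (h.pow_left n), mul_one, pow_succ]

theorem pcomm_pow_mul_pow_pcomm (hx : Commute (pcomm x y) x) (hy : Commute (pcomm x y) y)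
    (m n : ℕ) : pcomm (x ^ m * pcomm x y ^ n) y = pcomm x y ^ m := by
  rw [← (hx.pow_pow n m).eq, pcomm_mul_left_of_commute (hy.pow_left n),
    pcomm_pow_left_of_commute hx]

theorem pcomm_pow_left (hx : Commute (pcomm (pcomm x y) x) x)
    (hxy : Commute (pcomm (pcomm x y) x) (pcomm x y)) (n : ℕ) :
    pcomm (x ^ n) y = pcomm x y ^ n * pcomm (pcomm x y) x ^ n.choose 2 := by
  induction n with
  | zero => simp [pcomm]
  | succ n ih =>
    rw [pow_succ, pcomm_mul_left, ih, pcomm_pow_mul_pow_pcomm hxy hx, mul_assoc, mul_assoc,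
      ← mul_assoc (_ ^ n.choose 2), ← pow_add, (hxy.pow_left _).eq, ← mul_assoc, ← pow_succ,
      Nat.choose_succ_succ' n 1, Nat.choose_one_right, add_comm (n.choose _)]

theorem pcomm_pow_right (hy : Commute (pcomm (pcomm x y) y) y)
    (hxy : Commute (pcomm (pcomm x y) y) (pcomm x y)) (n : ℕ) :
    pcomm x (y ^ n) = pcomm x y ^ n * pcomm (pcomm x y) y ^ n.choose 2 := by
  induction n with
  | zero => simp [pcomm]
  | succ n ih =>
    rw [pow_succ, pcomm_mul_right, ih, pcomm_pow_mul_pow_pcomm hxy hy, mul_assoc, ← mul_assoc,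
      ← pow_succ', ← pow_add, Nat.choose_succ_succ' n 1, Nat.choose_one_right,
      add_comm (n.choose _)]

theorem exists_eq_pow_mul_pow_mul_pcomm_pow (hx : Commute (pcomm x y) x)
    (hy : Commute (pcomm x y) y) (hz : z ∈ Submonoid.closure {x, y}) :
    ∃ i j k : ℕ, z = y ^ j * x ^ i * pcomm x y ^ k := by
  induction hz using Submonoid.closure_induction_right with
  | one => exact ⟨0, 0, 0, by simp⟩
  | mul_right _ _ g hg ih =>
    obtain ⟨i, j, k, rfl⟩ := ih
    obtain rfl | rfl := hg
    · refine ⟨i + 1, j, k, ?_⟩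
      rw [mul_assoc, (hx.pow_left k).eq, pow_succ]
      simp only [mul_assoc]
    · refine ⟨i, j + 1, i + k, ?_⟩
      have hmove : x ^ i * g = g * (x ^ i * pcomm x g ^ i) := by
        rw [mul_eq_mul_mul_pcomm, pcomm_pow_left_of_commute hx]
      calc
        g ^ j * x ^ i * pcomm x g ^ k * g = g ^ j * (x ^ i * g) * pcomm x g ^ k := by
          rw [mul_assoc, (hy.pow_left k).eq]
          simp only [mul_assoc]
        _ = g ^ (j + 1) * x ^ i * pcomm x g ^ (i + k) := by
          rw [hmove, pow_succ, pow_add]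
          simp only [mul_assoc]

end Commutator

section TwoPower

theorem pow_two_pow_eq_one_of_le {M : Type*} [Monoid M] {z : M} {s k : ℕ} (hz : z ^ 2 ^ s = 1)
    (hsk : s ≤ k) : z ^ 2 ^ k = 1 :=
  orderOf_dvd_iff_pow_eq_one.1 ((orderOf_dvd_of_pow_eq_one hz).trans (pow_dvd_pow 2 hsk))

theorem not_two_pow_dvd_two_pow_pred {k : ℕ} (hk : k ≠ 0) : ¬ 2 ^ k ∣ 2 ^ (k - 1) := by
  rw [Nat.pow_dvd_pow_iff_le_right Nat.one_lt_two]
  lia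

theorem choose_two_two_pow_succ (k : ℕ) : (2 ^ (k + 1)).choose 2 = 2 ^ k * (2 ^ (k + 1) - 1) := by
  rw [Nat.choose_two_right, pow_succ', mul_assoc, Nat.mul_div_cancel_left _ two_pos]

theorem two_pow_dvd_choose_two_two_pow {s k : ℕ} (hsk : s < k) : 2 ^ s ∣ (2 ^ k).choose 2 := by
  obtain ⟨d, rfl⟩ := Nat.exists_eq_add_of_lt hsk
  rw [choose_two_two_pow_succ, pow_add, mul_assoc]
  exact dvd_mul_right _ _

theorem pow_choose_two_two_pow_eq_one {M : Type*} [Monoid M] {z : M} {s k : ℕ}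
    (hz : z ^ 2 ^ s = 1) (hsk : s < k) : z ^ (2 ^ k).choose 2 = 1 :=
  orderOf_dvd_iff_pow_eq_one.1
    ((orderOf_dvd_of_pow_eq_one hz).trans (two_pow_dvd_choose_two_two_pow hsk))

/- Since `j + d * j.choose 2 = j * (1 + d / 2 * (j - 1))`, where the second factor is odd. -/
theorem two_pow_dvd_of_dvd_add_mul_choose_two {n d j : ℕ} (hd : 4 ∣ d)
    (h : 2 ^ n ∣ j + d * j.choose 2) : 2 ^ n ∣ j := by
  obtain ⟨e, rfl⟩ := hd
  have hfactor : j + 4 * e * j.choose 2 = j * (1 + 2 * (e * (j - 1))) := by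
    have hchoose : j.choose 2 * 2 = j * (j - 1) := by
      rw [Nat.choose_two_right, Nat.div_mul_cancel (Nat.even_mul_pred_self j).two_dvd]
    linear_combination 2 * e * hchoose
  rw [hfactor] at h
  refine Nat.Coprime.dvd_of_dvd_mul_right (Nat.Coprime.pow_left n ?_) h
  simp

end TwoPower

section Relations

variable {P : Type*} [Group P] {α β γ σ : ℕ} {Z : Subgroup P} {a b : P}

/-- The elements `a` and `b` satisfy the relations of type (ii) modulo the subgroup `Z`, which need
not be normal: every relator takes its value in `Z`. -/
structure SatisfiesRelsII (α β γ σ : ℕ) (Z : Subgroup P) (a b : P) : Prop where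
  left_pow_mem : a ^ 2 ^ α ∈ Z
  right_pow_mem : b ^ 2 ^ β ∈ Z
  pcomm_left_mem : pcomm (pcomm a b) a ∈ Z
  pcomm_right_mem : pcomm (pcomm a b) b ∈ Z
  mul_pcomm_inv_mem : a ^ 2 ^ (α + σ - γ) * (pcomm a b ^ 2 ^ σ)⁻¹ ∈ Z

theorem satisfiesRelsII_map_iff {f : FreeGroup (Fin 2) →* P} :
    SatisfiesRelsII α β γ σ Z (f (FreeGroup.of 0)) (f (FreeGroup.of 1)) ↔
      ∀ r ∈ relsII α β γ σ, f r ∈ Z := by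
  simp only [relsII, Set.forall_mem_insert, Set.mem_singleton_iff, forall_eq, map_mul, map_inv,
    map_pow, map_pcomm]
  exact ⟨fun ⟨h₁, h₂, h₃, h₄, h₅⟩ => ⟨h₁, h₂, h₃, h₄, h₅⟩,
    fun ⟨h₁, h₂, h₃, h₄, h₅⟩ => ⟨h₁, h₂, h₃, h₄, h₅⟩⟩

theorem mem_centralizer_pair_iff {g : P} :
    g ∈ Subgroup.centralizer {a, b} ↔ Commute g a ∧ Commute g b := by
  simp [Subgroup.mem_centralizer_iff, commute_iff_eq, eq_comm (b := g * _)]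

theorem range_eq_pair {S : Type*} (x : Fin 2 → S) : Set.range x = {x 0, x 1} := by
  ext g
  simp [Fin.exists_fin_two, eq_comm]

theorem of_zero_pow_mem_centralWords_iff {x : Fin 2 → P} {k : ℕ} :
    FreeGroup.of 0 ^ k ∈ centralWords x ↔ Commute (x 0 ^ k) (x 1) := by
  rw [centralWords_eq_comap_centralizer, range_eq_pair, Subgroup.mem_comap, map_pow,
    FreeGroup.lift_apply_of, mem_centralizer_pair_iff, and_iff_right (Commute.pow_self _ k)]

theorem of_one_pow_mem_centralWords_iff {x : Fin 2 → P} {k : ℕ} :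
    FreeGroup.of 1 ^ k ∈ centralWords x ↔ Commute (x 0) (x 1 ^ k) := by
  rw [centralWords_eq_comap_centralizer, range_eq_pair, Subgroup.mem_comap, map_pow,
    FreeGroup.lift_apply_of, mem_centralizer_pair_iff, and_iff_left (Commute.pow_self _ k),
    Commute.symm_iff]

theorem normalClosure_relsII_le_centralWords_iff {x : Fin 2 → P} :
    Subgroup.normalClosure (relsII α β γ σ) ≤ centralWords x ↔
      SatisfiesRelsII α β γ σ (Subgroup.centralizer {x 0, x 1}) (x 0) (x 1) := by
  rw [← Subgroup.normalClosure_subset_iff, centralWords_eq_comap_centralizer, range_eq_pair]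
  have hiff := satisfiesRelsII_map_iff (α := α) (β := β) (γ := γ) (σ := σ)
    (Z := Subgroup.centralizer {x 0, x 1}) (f := FreeGroup.lift x)
  simp only [FreeGroup.lift_apply_of] at hiff
  exact hiff.symm

theorem lift_eq_one_of_mem_normalClosure_relsII {x : Fin 2 → P} {w : FreeGroup (Fin 2)}
    (hx : SatisfiesRelsII α β γ σ ⊥ (x 0) (x 1))
    (hw : w ∈ Subgroup.normalClosure (relsII α β γ σ)) : FreeGroup.lift x w = 1 := by
  have hrels : SatisfiesRelsII α β γ σ ⊥ (FreeGroup.lift x (FreeGroup.of 0))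
      (FreeGroup.lift x (FreeGroup.of 1)) := by
    simpa only [FreeGroup.lift_apply_of] using hx
  exact PresentedGroup.closure_rels_subset_ker (satisfiesRelsII_map_iff.1 hrels) hw

theorem satisfiesRelsII_presentedGroup :
    SatisfiesRelsII α β γ σ ⊥ (PresentedGroup.mk (relsII α β γ σ) (FreeGroup.of 0))
      (PresentedGroup.mk (relsII α β γ σ) (FreeGroup.of 1)) :=
  satisfiesRelsII_map_iff.2 fun _ hr => PresentedGroup.one_of_mem hr

theorem two_pow_dvd_of_right_pow_mem_normalClosure_relsII {k : ℕ}
    (hk : FreeGroup.of 1 ^ k ∈ Subgroup.normalClosure (relsII α β γ σ)) : 2 ^ β ∣ k := by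
  let x : Fin 2 → Multiplicative (ZMod (2 ^ β)) := ![1, Multiplicative.ofAdd 1]
  have hx : SatisfiesRelsII α β γ σ ⊥ (x 0) (x 1) := by
    constructor <;> simp [x, pcomm, ← ofAdd_nsmul]
  have hpow := lift_eq_one_of_mem_normalClosure_relsII hx hk
  simpa [x, ← ofAdd_nsmul, ZMod.natCast_eq_zero_iff] using hpow

end Relations

section Necessity

variable {P : Type*} [Group P] {α β γ σ : ℕ} {A B : P}

namespace SatisfiesRelsII

theorem pcomm_pcomm_left_pow_eq_one
    (h : SatisfiesRelsII α β γ σ (Subgroup.centralizer {A, B}) A B) :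
    pcomm (pcomm A B) A ^ 2 ^ σ = 1 := by
  have hXA := (mem_centralizer_pair_iff.1 h.pcomm_left_mem).1
  have hXC : Commute (pcomm (pcomm A B) A) (pcomm A B) :=
    commute_pcomm hXA (mem_centralizer_pair_iff.1 h.pcomm_left_mem).2
  have hCA : Commute (pcomm A B ^ 2 ^ σ) A := by
    have hcentral := (mem_centralizer_pair_iff.1 h.mul_pcomm_inv_mem).1
    have hinv := (Commute.pow_self A (2 ^ (α + σ - γ))).inv_left.mul_left hcentral
    rwa [inv_mul_cancel_left, Commute.inv_left_iff] at hinv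
  rw [← pcomm_pow_left_of_commute hXC, pcomm_eq_one_iff.2 hCA]

theorem pcomm_pow_left_two_pow
    (h : SatisfiesRelsII α β γ σ (Subgroup.centralizer {A, B}) A B) {k : ℕ} (hk : σ < k) :
    pcomm (A ^ 2 ^ k) B = pcomm A B ^ 2 ^ k := by
  obtain ⟨hXA, hXB⟩ := mem_centralizer_pair_iff.1 h.pcomm_left_mem
  rw [pcomm_pow_left hXA (commute_pcomm hXA hXB),
    pow_choose_two_two_pow_eq_one h.pcomm_pcomm_left_pow_eq_one hk, mul_one]

theorem pcomm_pow_right_two_pow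
    (h : SatisfiesRelsII α β γ σ (Subgroup.centralizer {A, B}) A B) (k : ℕ) :
    pcomm A (B ^ 2 ^ k) =
      pcomm A B ^ 2 ^ k * pcomm (pcomm A B) B ^ (2 ^ k).choose 2 := by
  obtain ⟨hYA, hYB⟩ := mem_centralizer_pair_iff.1 h.pcomm_right_mem
  exact pcomm_pow_right hYB (commute_pcomm hYA hYB) _

theorem pcomm_pow_eq_pcomm_pcomm_right_pow
    (h : SatisfiesRelsII α β γ σ (Subgroup.centralizer {A, B}) A B) (hγα : γ < α) :
    pcomm A B ^ 2 ^ (α + σ - γ) = pcomm (pcomm A B) B ^ 2 ^ σ := by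
  obtain ⟨hYA, hYB⟩ := mem_centralizer_pair_iff.1 h.pcomm_right_mem
  have hcentral := (mem_centralizer_pair_iff.1 h.mul_pcomm_inv_mem).2
  rw [commute_mul_inv_iff_pcomm_eq, h.pcomm_pow_left_two_pow (by lia),
    pcomm_pow_left_of_commute (commute_pcomm hYA hYB)] at hcentral
  exact hcentral

theorem pcomm_pow_eq_one_of_left
    (h : SatisfiesRelsII α β γ σ (Subgroup.centralizer {A, B}) A B) (hσα : σ < α) :
    pcomm A B ^ 2 ^ α = 1 := by
  rw [← h.pcomm_pow_left_two_pow hσα, pcomm_eq_one_iff]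
  exact (mem_centralizer_pair_iff.1 h.left_pow_mem).2

theorem pcomm_pcomm_right_pow_two_pow
    (h : SatisfiesRelsII α β γ σ (Subgroup.centralizer {A, B}) A B) (hγα : γ < α) {k : ℕ}
    (hσk : σ ≤ k) : pcomm (pcomm A B) B ^ 2 ^ k = pcomm A B ^ 2 ^ (α + k - γ) := by
  rw [← Nat.add_sub_cancel' hσk, pow_add, pow_mul, ← h.pcomm_pow_eq_pcomm_pcomm_right_pow hγα,
    ← pow_mul, ← pow_add]
  congr 2
  lia

theorem pcomm_pcomm_right_pow_eq_one
    (h : SatisfiesRelsII α β γ σ (Subgroup.centralizer {A, B}) A B) (hσγ : σ ≤ γ) (hγα : γ < α) :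
    pcomm (pcomm A B) B ^ 2 ^ γ = 1 := by
  rw [h.pcomm_pcomm_right_pow_two_pow hγα hσγ, Nat.add_sub_cancel,
    h.pcomm_pow_eq_one_of_left (by lia)]

theorem pcomm_pow_right_two_pow_of_lt
    (h : SatisfiesRelsII α β γ σ (Subgroup.centralizer {A, B}) A B) (hσγ : σ ≤ γ) (hγα : γ < α)
    {k : ℕ} (hγk : γ < k) : pcomm A (B ^ 2 ^ k) = pcomm A B ^ 2 ^ k := by
  rw [h.pcomm_pow_right_two_pow,
    pow_choose_two_two_pow_eq_one (h.pcomm_pcomm_right_pow_eq_one hσγ hγα) hγk, mul_one]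

theorem pcomm_pow_eq_one_of_right
    (h : SatisfiesRelsII α β γ σ (Subgroup.centralizer {A, B}) A B) (hσγ : σ ≤ γ) (hγα : γ < α)
    (hγβ : γ < β) : pcomm A B ^ 2 ^ β = 1 := by
  rw [← h.pcomm_pow_right_two_pow_of_lt hσγ hγα hγβ, pcomm_eq_one_iff]
  exact (mem_centralizer_pair_iff.1 h.right_pow_mem).1.symm

/- For `k = γ` the correction term no longer vanishes: `[[A,B],B]` has the power
`[A,B] ^ 2 ^ (α - 1)` as its `2 ^ (γ - 1)`-th power. -/
theorem commute_right_pow_of_eq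
    (h : SatisfiesRelsII α α γ σ (Subgroup.centralizer {A, B}) A B) (hσγ : σ < γ)
    (hγα : γ + 1 = α) : Commute A (B ^ 2 ^ γ) := by
  obtain ⟨k, rfl⟩ : ∃ k, γ = k + 1 := ⟨γ - 1, by lia⟩
  rw [← pcomm_eq_one_iff, h.pcomm_pow_right_two_pow, choose_two_two_pow_succ, pow_mul,
    h.pcomm_pcomm_right_pow_two_pow (by lia) (by lia), show α + k - (k + 1) = k + 1 by lia,
    ← pow_succ', Nat.sub_add_cancel Nat.one_le_two_pow, ← pow_mul, ← pow_add]
  exact pow_two_pow_eq_one_of_le (h.pcomm_pow_eq_one_of_left (by lia)) (by lia)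

theorem eq_and_lt_of_not_commute
    (h : SatisfiesRelsII α β γ σ (Subgroup.centralizer {A, B}) A B) (hσγ : σ < γ)
    (hγα : γ < α) (hγβ : γ < β) (hA : ¬ Commute (A ^ 2 ^ (α - 1)) B)
    (hB : ¬ Commute A (B ^ 2 ^ (β - 1))) : α = β ∧ γ < β - 1 := by
  have hαβ : α ≤ β := by
    by_contra! hlt
    rw [← pcomm_eq_one_iff, h.pcomm_pow_left_two_pow (by lia)] at hA
    exact hA (pow_two_pow_eq_one_of_le (h.pcomm_pow_eq_one_of_right hσγ.le hγα hγβ) (by lia))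
  have hγ : γ < β - 1 := by
    by_contra! hle
    obtain rfl : α = β := by lia
    obtain rfl : γ = α - 1 := by lia
    exact hB (h.commute_right_pow_of_eq hσγ (by lia))
  have hβα : β ≤ α := by
    by_contra! hlt
    rw [← pcomm_eq_one_iff, h.pcomm_pow_right_two_pow_of_lt hσγ.le hγα hγ] at hB
    exact hB (pow_two_pow_eq_one_of_le (h.pcomm_pow_eq_one_of_left (by lia)) (by lia))
  exact ⟨hαβ.antisymm hβα, hγ⟩

end SatisfiesRelsII

end Necessity

section Translations

variable {H U : Type*} [AddCommGroup H]

theorem commute_addRight (g h : H) : Commute (Equiv.addRight g) (Equiv.addRight h) := by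
  ext z
  exact add_right_comm z h g

theorem addRight_eq_one_iff {h : H} : Equiv.addRight h = 1 ↔ h = 0 := by
  refine ⟨fun hh => ?_, fun hh => by rw [hh, Equiv.addRight_zero]⟩
  simpa using DFunLike.congr_fun hh 0

theorem pcomm_addRight_toPerm_inv [Group U] [DistribMulAction U H] (h : H) (u : U) :
    pcomm (Equiv.addRight h) (MulAction.toPerm u⁻¹) = Equiv.addRight (u • h - h) := by
  ext z
  simp [pcomm, smul_add]
  abel

theorem exists_unit_smul_eq_add {D : AddMonoid.End H} (hD : IsNilpotent D) :
    ∃ u : (AddMonoid.End H)ˣ, ∀ z : H, u • z = z + D z := by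
  obtain ⟨u, hu⟩ := hD.isUnit_one_add
  refine ⟨u, fun z => ?_⟩
  rw [Units.smul_def, hu]
  rfl

theorem pow_smul_eq_add_nsmul [Monoid U] [DistribMulAction U H] {D : AddMonoid.End H} {u : U}
    (hu : ∀ z : H, u • z = z + D z) (hD : ∀ z, D (D z) = 0) (n : ℕ) (z : H) :
    u ^ n • z = z + n • D z := by
  induction n with
  | zero => simp
  | succ n ih =>
    rw [pow_succ', mul_smul, ih, hu, map_add, map_nsmul, hD, smul_zero, add_zero, succ_nsmul,
      add_assoc]

end Translations

section ZModPair

theorem nsmul_add_nsmul_eq_zero_iff {m n r i k : ℕ} :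
    i • ((1, 0) : ZMod m × ZMod n) + k • ((r, 1) : ZMod m × ZMod n) = 0 ↔
      m ∣ i + r * k ∧ n ∣ k := by
  simp [Prod.ext_iff, ← ZMod.natCast_eq_zero_iff, mul_comm (r : ZMod m)]

theorem exists_end_apply_eq {m n r : ℕ} (hnm : n ∣ m) (hr : m ∣ r * (r * n)) :
    ∃ D : AddMonoid.End (ZMod m × ZMod n), D (1, 0) = (↑r, 1) ∧ D (↑r, 1) = 0 ∧
      ∀ z, D z ∈ AddSubgroup.zmultiples ((r, 1) : ZMod m × ZMod n) := by
  let y : ZMod m × ZMod n := (r, 1)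
  have hm : zmultiplesHom _ y (m : ℤ) = 0 := by
    simp [y, Prod.ext_iff, ZMod.natCast_eq_zero_iff, hnm]
  have hn : zmultiplesHom _ (-(r • y)) (n : ℤ) = 0 := by
    simp [y, Prod.ext_iff, ← Nat.cast_mul, ZMod.natCast_eq_zero_iff, mul_left_comm n, mul_comm n,
      hr]
  let f : ZMod m →+ ZMod m × ZMod n := ZMod.lift m ⟨_, hm⟩
  let g : ZMod n →+ ZMod m × ZMod n := ZMod.lift n ⟨_, hn⟩
  have hf (i : ℤ) : f i = i • y := ZMod.lift_coe _ _ i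
  have hg (i : ℤ) : g i = i • -(r • y) := ZMod.lift_coe _ _ i
  refine ⟨f.coprod g, ?_, ?_, ?_⟩
  · have hf1 := hf 1
    change f 1 + g 0 = y
    simp_all
  · have hfr := hf r
    have hg1 := hg 1
    change f r + g 1 = 0
    simp_all
  · rintro ⟨i, k⟩
    obtain ⟨i, rfl⟩ := ZMod.intCast_surjective i
    obtain ⟨k, rfl⟩ := ZMod.intCast_surjective k
    change f i + g k ∈ AddSubgroup.zmultiples y
    have hy : y ∈ AddSubgroup.zmultiples y := AddSubgroup.mem_zmultiples y
    rw [hf, hg]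
    exact add_mem (zsmul_mem hy _) (zsmul_mem (neg_mem (nsmul_mem hy _)) _)

end ZModPair

section RelsIIModule

/-- The additive form of the abelian group generated by `a` and `[a,b]` in the group of type (ii),
with `e` standing for `a` and `D` for the map `z ↦ [z,b]`, so that `D e` stands for `[a,b]`: the
elements `e` and `D e` satisfy the relations of that subgroup and no others. -/
structure IsRelsIIModule {M : Type*} [AddCommGroup M] (α γ σ : ℕ) (D : AddMonoid.End M) (e : M) :
    Prop where
  map_map : ∀ z, D (D z) = 0
  nsmul_map : ∀ z, 2 ^ γ • D z = 0
  nsmul_eq_zero : 2 ^ α • e = 0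
  nsmul_eq : 2 ^ (α + σ - γ) • e = 2 ^ σ • D e
  dvd_of_eq_zero : ∀ i k : ℕ, i • e + k • D e = 0 → 2 ^ α ∣ i + 2 ^ (α - γ) * k ∧ 2 ^ σ ∣ k

variable {α β γ σ : ℕ}

theorem exists_isRelsIIModule (hσγ : σ ≤ γ) (hγα : γ ≤ α) (h2γ : 2 * γ ≤ α + σ) :
    ∃ (M : Type) (_ : AddCommGroup M) (D : AddMonoid.End M) (e : M), IsRelsIIModule α γ σ D e := by
  obtain ⟨D, hDe, hDy, hD⟩ := exists_end_apply_eq (m := 2 ^ α) (n := 2 ^ σ) (r := 2 ^ (α - γ))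
    (pow_dvd_pow 2 (hσγ.trans hγα)) (by
      rw [← pow_add, ← pow_add]
      exact pow_dvd_pow 2 (by lia))
  have hα : 2 ^ γ * 2 ^ (α - γ) = 2 ^ α := by rw [← pow_add, Nat.add_sub_cancel' hγα]
  have hσα : 2 ^ σ * 2 ^ (α - γ) = 2 ^ (α + σ - γ) := by
    rw [← pow_add]
    congr 1
    lia
  refine ⟨_, _, D, (1, 0), ?_, ?_, ?_, ?_, ?_⟩
  · intro z
    obtain ⟨k, hk⟩ := AddSubgroup.mem_zmultiples_iff.1 (hD z)
    rw [← hk, map_zsmul, hDy, smul_zero]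
  · intro z
    obtain ⟨k, hk⟩ := AddSubgroup.mem_zmultiples_iff.1 (hD z)
    have hy := (nsmul_add_nsmul_eq_zero_iff (m := 2 ^ α) (n := 2 ^ σ) (r := 2 ^ (α - γ)) (i := 0)
      (k := 2 ^ γ)).2 ⟨by rw [zero_add, mul_comm, hα], pow_dvd_pow 2 hσγ⟩
    rw [zero_smul, zero_add] at hy
    rw [← hk, smul_comm, hy, smul_zero]
  · simp
  · simp [hDe, ← hσα, mul_smul]
  · intro i k h
    rwa [hDe, nsmul_add_nsmul_eq_zero_iff] at h

namespace IsRelsIIModule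

theorem exists_satisfiesRelsII_bot {M : Type*} [AddCommGroup M] {D : AddMonoid.End M} {e : M}
    (h : IsRelsIIModule α γ σ D e) (hγβ : γ ≤ β) :
    ∃ A B : Equiv.Perm M, SatisfiesRelsII α β γ σ ⊥ A B ∧ ∀ k : ℕ, A ^ k = 1 → 2 ^ α ∣ k := by
  have hnil : IsNilpotent D := ⟨2, by
    ext z
    rw [pow_two]
    exact h.map_map z⟩
  obtain ⟨u, hu⟩ := exists_unit_smul_eq_add hnil
  have hpcomm (z : M) :
      pcomm (Equiv.addRight z) (MulAction.toPerm u⁻¹) = Equiv.addRight (D z) := by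
    rw [pcomm_addRight_toPerm_inv, hu, add_sub_cancel_left]
  refine ⟨Equiv.addRight e, MulAction.toPerm u⁻¹, ⟨?_, ?_, ?_, ?_, ?_⟩, fun k hk => ?_⟩
  · rw [Subgroup.mem_bot, Equiv.nsmul_addRight, h.nsmul_eq_zero, Equiv.addRight_zero]
  · obtain ⟨d, rfl⟩ := Nat.exists_eq_add_of_le hγβ
    have hu_pow : MulAction.toPerm u ^ 2 ^ (γ + d) = (1 : Equiv.Perm M) := by
      ext z
      rw [← MulAction.toPermHom_apply, ← map_pow, MulAction.toPermHom_apply,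
        MulAction.toPerm_apply, pow_smul_eq_add_nsmul hu h.map_map, pow_add, mul_comm, mul_smul,
        h.nsmul_map, smul_zero, add_zero, Equiv.Perm.one_apply]
    rw [Subgroup.mem_bot, ← MulAction.toPermHom_apply, map_inv, inv_pow,
      MulAction.toPermHom_apply, hu_pow, inv_one]
  · rw [hpcomm, Subgroup.mem_bot, pcomm_eq_one_iff]
    exact commute_addRight _ _
  · rw [hpcomm, hpcomm, h.map_map, Equiv.addRight_zero, Subgroup.mem_bot]
  · rw [hpcomm, Equiv.nsmul_addRight, Equiv.nsmul_addRight, h.nsmul_eq, mul_inv_cancel,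
      Subgroup.mem_bot]
  · rw [Equiv.nsmul_addRight, addRight_eq_one_iff] at hk
    simpa using (h.dvd_of_eq_zero k 0 (by simpa using hk)).1

end IsRelsIIModule

theorem two_pow_dvd_of_left_pow_mem_normalClosure_relsII (hσγ : σ ≤ γ) (hγα : γ ≤ α)
    (h2γ : 2 * γ ≤ α + σ) (hγβ : γ ≤ β) {k : ℕ}
    (hk : FreeGroup.of 0 ^ k ∈ Subgroup.normalClosure (relsII α β γ σ)) : 2 ^ α ∣ k := by
  obtain ⟨M, _, D, e, h⟩ := exists_isRelsIIModule hσγ hγα h2γ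
  obtain ⟨A, B, hAB, hA⟩ := h.exists_satisfiesRelsII_bot hγβ
  apply hA
  simpa using lift_eq_one_of_mem_normalClosure_relsII (x := ![A, B]) hAB hk

end RelsIIModule

section CapabilityModel

/-- Elements `A` and `B` generating a group whose central quotient, if `γ < n - 1`, is the group of
type (ii) with `α = β = n`: the commutator `[A,B]` commutes with `A`, the commutator `[A,B,B]` is
central, and the abelian group generated by `[A,B]` and `[A,B,B]` has the same relations as the one
generated by `a` and `[a,b]` in the quotient. -/
structure IsCapabilityModel {P : Type*} [Group P] (n γ σ : ℕ) (A B : P) : Prop where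
  commute_left : Commute (pcomm A B) A
  commute_pcomm_left : Commute (pcomm (pcomm A B) B) A
  commute_pcomm_right : Commute (pcomm (pcomm A B) B) B
  pcomm_pow_eq_one : pcomm A B ^ 2 ^ n = 1
  pcomm_pcomm_pow_eq_one : pcomm (pcomm A B) B ^ 2 ^ γ = 1
  pcomm_pow_eq : pcomm A B ^ 2 ^ (n + σ - γ) = pcomm (pcomm A B) B ^ 2 ^ σ
  dvd_of_eq_one : ∀ i k : ℕ, pcomm A B ^ i * pcomm (pcomm A B) B ^ k = 1 →
    2 ^ n ∣ i + 2 ^ (n - γ) * k ∧ 2 ^ σ ∣ k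

variable {n γ σ : ℕ}

theorem IsRelsIIModule.exists_isCapabilityModel {M : Type*} [AddCommGroup M]
    {D : AddMonoid.End M} {e : M} (h : IsRelsIIModule n γ σ D e) :
    ∃ A B : Equiv.Perm (ℤ × M), IsCapabilityModel n γ σ A B := by
  let E : AddMonoid.End (ℤ × M) := (AddMonoidHom.inr ℤ M).comp ((zmultiplesHom M e).coprod D)
  have hE (z : ℤ × M) : E z = (0, z.1 • e + D z.2) := rfl
  have hnil : IsNilpotent E := ⟨3, by
    ext z : 1
    rw [pow_succ, pow_two]
    change E (E (E z)) = 0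
    simp [hE, h.map_map]⟩
  obtain ⟨u, hu⟩ := exists_unit_smul_eq_add hnil
  have hpcomm (z : ℤ × M) :
      pcomm (Equiv.addRight z) (MulAction.toPerm u⁻¹) = Equiv.addRight (E z) := by
    rw [pcomm_addRight_toPerm_inv, hu, add_sub_cancel_left]
  have hE1 : E (1, 0) = (0, e) := by simp [hE]
  have hE2 (z : M) : E (0, z) = (0, D z) := by simp [hE]
  refine ⟨Equiv.addRight (1, 0), MulAction.toPerm u⁻¹, ?_, ?_, ?_, ?_, ?_, ?_, fun i k hik => ?_⟩
  · rw [hpcomm]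
    exact commute_addRight _ _
  · rw [hpcomm, hpcomm]
    exact commute_addRight _ _
  · rw [← pcomm_eq_one_iff, hpcomm, hpcomm, hpcomm, hE1, hE2, hE2, h.map_map, addRight_eq_one_iff]
    rfl
  · rw [hpcomm, hE1, Equiv.nsmul_addRight, addRight_eq_one_iff]
    simp [h.nsmul_eq_zero]
  · rw [hpcomm, hpcomm, hE1, hE2, Equiv.nsmul_addRight, addRight_eq_one_iff]
    simp [h.nsmul_map]
  · rw [hpcomm, hpcomm, hE1, hE2, Equiv.nsmul_addRight, Equiv.nsmul_addRight]
    simp [h.nsmul_eq]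
  · rw [hpcomm, hpcomm, hE1, hE2, Equiv.nsmul_addRight, Equiv.nsmul_addRight, ← Equiv.addRight_add,
      addRight_eq_one_iff, add_comm] at hik
    exact h.dvd_of_eq_zero i k (by simpa using congrArg Prod.snd hik)

end CapabilityModel

section Sufficiency

variable {P : Type*} [Group P] {α β n γ σ : ℕ}

theorem SatisfiesRelsII.pow_mul_pow_mul_pcomm_pow_eq_one {a b : P}
    (h : SatisfiesRelsII α β γ σ ⊥ a b) (hγα : γ ≤ α) {i j k : ℕ} (hj : 2 ^ β ∣ j)
    (hi : 2 ^ α ∣ i + 2 ^ (α - γ) * k) (hk : 2 ^ σ ∣ k) : b ^ j * a ^ i * pcomm a b ^ k = 1 := by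
  have hbj : b ^ j = 1 :=
    orderOf_dvd_iff_pow_eq_one.1 ((orderOf_dvd_of_pow_eq_one h.right_pow_mem).trans hj)
  have hck : pcomm a b ^ k = a ^ (2 ^ (α - γ) * k) := by
    obtain ⟨k, rfl⟩ := hk
    rw [pow_mul, ← mul_inv_eq_one.1 h.mul_pcomm_inv_mem, ← pow_mul, ← mul_assoc, ← pow_add,
      ← Nat.sub_add_comm hγα]
  rw [hbj, one_mul, hck, ← pow_add]
  exact orderOf_dvd_iff_pow_eq_one.1 ((orderOf_dvd_of_pow_eq_one h.left_pow_mem).trans hi)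

theorem exists_mk_eq_pow_mul_pow_mul_pcomm_pow (w : FreeGroup (Fin 2)) :
    ∃ i j k : ℕ, PresentedGroup.mk (relsII α β γ σ) w = PresentedGroup.mk (relsII α β γ σ)
      (FreeGroup.of 1 ^ j * FreeGroup.of 0 ^ i * pcomm (FreeGroup.of 0) (FreeGroup.of 1) ^ k) := by
  have h := satisfiesRelsII_presentedGroup (α := α) (β := β) (γ := γ) (σ := σ)
  have hgen : PresentedGroup.mk (relsII α β γ σ) w ∈
      Submonoid.closure {PresentedGroup.mk (relsII α β γ σ) (FreeGroup.of 0),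
        PresentedGroup.mk (relsII α β γ σ) (FreeGroup.of 1)} := by
    change _ ∈ Submonoid.closure {PresentedGroup.of 0, PresentedGroup.of 1}
    rw [← range_eq_pair PresentedGroup.of, ← Subgroup.closure_toSubmonoid_of_isOfFinOrder,
      PresentedGroup.closure_range_of]
    · exact Submonoid.mem_top _
    · rw [Set.forall_mem_range, Fin.forall_fin_two]
      exact ⟨isOfFinOrder_iff_pow_eq_one.2 ⟨_, Nat.two_pow_pos α, h.left_pow_mem⟩,
        isOfFinOrder_iff_pow_eq_one.2 ⟨_, Nat.two_pow_pos β, h.right_pow_mem⟩⟩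
  obtain ⟨i, j, k, hw⟩ := exists_eq_pow_mul_pow_mul_pcomm_pow
    (pcomm_eq_one_iff.1 h.pcomm_left_mem) (pcomm_eq_one_iff.1 h.pcomm_right_mem) hgen
  refine ⟨i, j, k, ?_⟩
  simpa only [map_mul, map_pow, map_pcomm] using hw

namespace IsCapabilityModel

variable {A B : P}

theorem commute_pcomm_pcomm (h : IsCapabilityModel n γ σ A B) :
    Commute (pcomm (pcomm A B) B) (pcomm A B) :=
  commute_pcomm h.commute_pcomm_left h.commute_pcomm_right

theorem pcomm_pow_right_eq (h : IsCapabilityModel n γ σ A B) (j : ℕ) :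
    pcomm A (B ^ j) = pcomm A B ^ j * pcomm (pcomm A B) B ^ j.choose 2 :=
  pcomm_pow_right h.commute_pcomm_right h.commute_pcomm_pcomm j

theorem satisfiesRelsII_centralizer (h : IsCapabilityModel n γ σ A B) (hγn : γ < n) :
    SatisfiesRelsII n n γ σ (Subgroup.centralizer {A, B}) A B := by
  refine ⟨?_, ?_, ?_, ?_, ?_⟩ <;> rw [mem_centralizer_pair_iff]
  · refine ⟨Commute.pow_self A _, ?_⟩
    rw [← pcomm_eq_one_iff, pcomm_pow_left_of_commute h.commute_left, h.pcomm_pow_eq_one]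
  · refine ⟨Commute.symm ?_, Commute.pow_self B _⟩
    rw [← pcomm_eq_one_iff, h.pcomm_pow_right_eq, h.pcomm_pow_eq_one,
      pow_choose_two_two_pow_eq_one h.pcomm_pcomm_pow_eq_one hγn, mul_one]
  · rw [pcomm_eq_one_iff.2 h.commute_left]
    exact ⟨Commute.one_left A, Commute.one_left B⟩
  · exact ⟨h.commute_pcomm_left, h.commute_pcomm_right⟩
  · refine ⟨(Commute.pow_self A _).mul_left (h.commute_left.pow_left _).inv_left, ?_⟩
    rw [commute_mul_inv_iff_pcomm_eq, pcomm_pow_left_of_commute h.commute_left,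
      pcomm_pow_left_of_commute h.commute_pcomm_pcomm, h.pcomm_pow_eq]

theorem dvd_of_mem_centralizer (h : IsCapabilityModel n γ σ A B) (hγn : γ + 1 < n) {i j k : ℕ}
    (hz : B ^ j * A ^ i * pcomm A B ^ k ∈ Subgroup.centralizer {A, B}) :
    2 ^ n ∣ j ∧ 2 ^ n ∣ i + 2 ^ (n - γ) * k ∧ 2 ^ σ ∣ k := by
  obtain ⟨hzA, hzB⟩ := mem_centralizer_pair_iff.1 hz
  rw [mul_assoc] at hzA hzB
  have hBA : Commute (B ^ j) A := by
    have hAC : Commute (A ^ i * pcomm A B ^ k) A :=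
      (Commute.pow_self A i).mul_left (h.commute_left.pow_left k)
    simpa only [mul_inv_cancel_right] using hzA.mul_left hAC.inv_left
  have hAB : Commute (A ^ i * pcomm A B ^ k) B := by
    simpa using (Commute.pow_self B j).inv_left.mul_left hzB
  constructor
  · rw [Commute.symm_iff, ← pcomm_eq_one_iff, h.pcomm_pow_right_eq] at hBA
    refine two_pow_dvd_of_dvd_add_mul_choose_two ?_ (h.dvd_of_eq_one _ _ hBA).1
    exact pow_dvd_pow 2 (show 2 ≤ n - γ by lia)
  · rw [← pcomm_eq_one_iff, pcomm_mul_left, pcomm_pow_left_of_commute h.commute_left,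
      pcomm_eq_one_iff.2 (Commute.pow_pow_self _ _ _), mul_one,
      pcomm_pow_left_of_commute h.commute_pcomm_pcomm] at hAB
    exact h.dvd_of_eq_one _ _ hAB

theorem centralWords_eq_normalClosure {x : Fin 2 → P} (h : IsCapabilityModel n γ σ (x 0) (x 1))
    (hγn : γ + 1 < n) : centralWords x = Subgroup.normalClosure (relsII n n γ σ) := by
  have hle : Subgroup.normalClosure (relsII n n γ σ) ≤ centralWords x :=
    normalClosure_relsII_le_centralWords_iff.2 (h.satisfiesRelsII_centralizer (by lia))
  refine le_antisymm (fun w hw => ?_) hle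
  obtain ⟨i, j, k, hwv⟩ := exists_mk_eq_pow_mul_pow_mul_pcomm_pow w
  have hv := mul_mem hw (hle (QuotientGroup.eq.1 hwv))
  rw [mul_inv_cancel_left, centralWords_eq_comap_centralizer, Subgroup.mem_comap, range_eq_pair]
    at hv
  simp only [map_mul, map_pow, map_pcomm, FreeGroup.lift_apply_of] at hv
  obtain ⟨hj, hi, hk⟩ := h.dvd_of_mem_centralizer hγn hv
  rw [← PresentedGroup.mk_eq_one_iff, hwv]
  simpa only [map_mul, map_pow, map_pcomm] using
    satisfiesRelsII_presentedGroup.pow_mul_pow_mul_pcomm_pow_eq_one (by lia) hj hi hk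

end IsCapabilityModel

end Sufficiency

/-- A general type group with `β ≥ γ > σ ≥ 0`, `α + σ ≥ 2γ`, `α + β + σ > 3`,
and `γ < β` is capable if and only if `α = β` and `γ < β - 1`. -/
theorem general_type_small_gamma_capable_iff (α β γ σ : ℕ)
    (hσγ : σ < γ) (hγβ : γ ≤ β) (h2γ : 2 * γ ≤ α + σ)
    (hsum : 3 < α + β + σ) (hγltβ : γ < β) :
    IsCapable (PresentedGroup (relsII α β γ σ)) ↔ (α = β ∧ γ < β - 1) := by
  rw [isCapable_presentedGroup_iff]
  constructor
  · rintro ⟨P, _, x, hx⟩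
    have hrels := normalClosure_relsII_le_centralWords_iff.1 hx.ge
    have hγα : γ < α := by lia
    refine hrels.eq_and_lt_of_not_commute hσγ hγα hγltβ (fun hA => ?_) (fun hB => ?_)
    · rw [← of_zero_pow_mem_centralWords_iff, hx] at hA
      exact not_two_pow_dvd_two_pow_pred (by lia)
        (two_pow_dvd_of_left_pow_mem_normalClosure_relsII hσγ.le hγα.le h2γ hγβ hA)
    · rw [← of_one_pow_mem_centralWords_iff, hx] at hB
      exact not_two_pow_dvd_two_pow_pred (by lia)
        (two_pow_dvd_of_right_pow_mem_normalClosure_relsII hB)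
  · rintro ⟨rfl, hγα⟩
    obtain ⟨M, _, D, e, h⟩ := exists_isRelsIIModule hσγ.le hγβ h2γ
    obtain ⟨A, B, hAB⟩ := h.exists_isCapabilityModel
    exact ⟨Equiv.Perm (ℤ × M), inferInstance, ![A, B],
      hAB.centralWords_eq_normalClosure (x := ![A, B]) (by lia)⟩
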